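/- (Key inequality for quantum Jeffrey's rule.) Let {P_1,…,P_n} ⊆ M_d(ℂ) be nonzero projections with P_i·P_j = δ_ij·P_i for all i,j and P_1 + … + P_n = 1, let ψ be a positive definite density matrix, let λ_1,…,λ_n > 0 with Σ_i λ_i = 1, let φ be a positive definite density matrix with φ·P_i = P_i·φ and Re tr(φ·P_i) = λ_i for all i, and set ρ := Σ_{i=1}^n λ_i·(P_i·ψ·P_i)/(Re tr(ψ·P_i)). Then Re(tr(ψ·(log ρ − log φ))) ≥ 0, with equality if and only if φ = ρ. -/

import Mathlib

open Matrix
open scoped ComplexOrder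

/-- Matrix logarithm: the real logarithm applied via the continuous functional calculus. -/
noncomputable def matLog {d : ℕ} (A : Matrix (Fin d) (Fin d) ℂ) : Matrix (Fin d) (Fin d) ℂ :=
  cfc Real.log A

/-- The Umegaki distance `D₀(φ,ψ) := Re (tr (ψ · (log ψ − log φ)))`. -/
noncomputable def umegakiD0 {d : ℕ} (φ ψ : Matrix (Fin d) (Fin d) ℂ) : ℝ :=
  (Matrix.trace (ψ * (matLog ψ - matLog φ))).re


theorem qj_scalar {r f : ℝ} (hr : 0 < r) (hf : 0 < f) :
    0 ≤ r * Real.log r - r * Real.log f - r + f := by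
  have h := Real.log_le_sub_one_of_pos (div_pos hf hr)
  rw [Real.log_div hf.ne' hr.ne'] at h
  have h2 := mul_le_mul_of_nonneg_left h hr.le
  have : r * (f / r - 1) = f - r := by field_simp
  linarith

theorem qj_scalar_eq {r f : ℝ} (hr : 0 < r) (hf : 0 < f)
    (h0 : r * Real.log r - r * Real.log f - r + f = 0) : r = f := by
  by_contra hne
  have h := Real.log_lt_sub_one_of_pos (div_pos hf hr)
    (by rw [Ne, div_eq_one_iff_eq hr.ne']; exact fun h => hne h.symm)
  rw [Real.log_div hf.ne' hr.ne'] at h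
  have h2 := mul_lt_mul_of_pos_left h hr
  have : r * (f / r - 1) = f - r := by field_simp
  linarith

theorem qj_comm {d : ℕ} {A P : Matrix (Fin d) (Fin d) ℂ} (h : A * P = P * A) (hA : A.IsHermitian) :
    matLog A * P = P * matLog A := by
  have : Commute A P := h
  exact (IsSelfAdjoint.commute_cfc (show IsSelfAdjoint A from hA) this Real.log).eq

theorem qj_trace {d : ℕ} (U V P : Matrix (Fin d) (Fin d) ℂ) (hPH : Pᴴ = P) (hPP : P * P = P)
    (h k : Fin d → ℝ)
    (hc : (V * diagonal (fun i => (k i : ℂ)) * Vᴴ) * P = P * (V * diagonal (fun i => (k i : ℂ)) * Vᴴ)) :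
    (trace (P * (U * diagonal (fun i => (h i : ℂ)) * Uᴴ) * (V * diagonal (fun i => (k i : ℂ)) * Vᴴ))).re
      = ∑ a, ∑ b, Complex.normSq ((Uᴴ * P * V) a b) * (h a * k b) := by
  have e : trace (P * (U * diagonal (fun i => (h i : ℂ)) * Uᴴ) * (V * diagonal (fun i => (k i : ℂ)) * Vᴴ))
      = trace (diagonal (fun i => (h i : ℂ)) * (Uᴴ * P * V) * diagonal (fun i => (k i : ℂ)) * (Uᴴ * P * V)ᴴ) := by
    generalize hH : diagonal (fun i => (h i : ℂ)) = H at *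
    generalize hK : diagonal (fun i => (k i : ℂ)) = K at *
    calc _ = trace (P * (P * (U * H * Uᴴ) * (V * K * Vᴴ))) := by
            simp only [← mul_assoc, hPP]
      _ = trace (P * (U * H * Uᴴ) * ((V * K * Vᴴ) * P)) := by
            rw [trace_mul_comm P]; simp only [mul_assoc]
      _ = trace ((P * U) * (H * Uᴴ * P * V * K * Vᴴ)) := by
            rw [hc]; simp only [mul_assoc]
      _ = _ := by
            rw [trace_mul_comm]
            simp only [conjTranspose_mul, conjTranspose_conjTranspose, hPH, mul_assoc]
  rw [e]
  generalize Uᴴ * P * V = W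
  simp only [trace, diag_apply, mul_apply (M := diagonal (fun i => (h i : ℂ)) * W * diagonal (fun i => (k i : ℂ))), mul_diagonal, diagonal_mul,
    conjTranspose_apply, Complex.re_sum]
  refine Finset.sum_congr rfl fun a _ => Finset.sum_congr rfl fun b _ => ?_
  simp [Complex.normSq_apply]
  ring

theorem qj_spec {d : ℕ} {A : Matrix (Fin d) (Fin d) ℂ} (hA : A.PosDef) :
    ∃ (U : Matrix (Fin d) (Fin d) ℂ) (a : Fin d → ℝ), U * Uᴴ = 1 ∧ Uᴴ * U = 1 ∧ (∀ i, 0 < a i) ∧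
      A = U * diagonal (fun i => (a i : ℂ)) * Uᴴ ∧
      matLog A = U * diagonal (fun i => (Real.log (a i) : ℂ)) * Uᴴ := by
  refine ⟨hA.1.eigenvectorUnitary, hA.1.eigenvalues, ?_, ?_, hA.eigenvalues_pos, ?_, ?_⟩
  · exact Unitary.coe_mul_star_self _
  · exact Unitary.coe_star_mul_self _
  · conv_lhs => rw [hA.1.spectral_theorem]
    rfl
  · rw [matLog, hA.1.cfc_eq]
    rfl

theorem qj_klein {d : ℕ} {A B P : Matrix (Fin d) (Fin d) ℂ} (hA : A.PosDef) (hB : B.PosDef)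
    (hPH : Pᴴ = P) (hPP : P * P = P) (hBP : B * P = P * B) :
    (trace (P * A)).re - (trace (P * B)).re ≤ (trace (P * A * (matLog A - matLog B))).re ∧
    ((trace (P * A * (matLog A - matLog B))).re = (trace (P * A)).re - (trace (P * B)).re →
      A * P = B * P) := by
  have hLB := qj_comm hBP hB.1
  obtain ⟨U, a, hU, hU', ha, hAe, hAl⟩ := qj_spec hA
  obtain ⟨V, b, hV, hV', hb, hBe, hBl⟩ := qj_spec hB
  have one : V * diagonal (fun i => (((fun _ => 1 : Fin d → ℝ) i : ℝ) : ℂ)) * Vᴴ = 1 := by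
    simp [hV]
  have oneU : U * diagonal (fun i => (((fun _ => 1 : Fin d → ℝ) i : ℝ) : ℂ)) * Uᴴ = 1 := by
    simp [hU]
  have c1 : (V * diagonal (fun i => (((fun _ => 1 : Fin d → ℝ) i : ℝ) : ℂ)) * Vᴴ) * P
     = P * (V * diagonal (fun i => (((fun _ => 1 : Fin d → ℝ) i : ℝ) : ℂ)) * Vᴴ) := by
    rw [one]; simp
  have t1 := qj_trace U V P hPH hPP (fun i => a i * Real.log (a i)) (fun _ => 1) c1
  have t2 := qj_trace U V P hPH hPP a (fun i => Real.log (b i)) (by rw [← hBl]; exact hLB)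
  have t3 := qj_trace U V P hPH hPP a (fun _ => 1) c1
  have t4 := qj_trace U V P hPH hPP (fun _ => 1) b (by rw [← hBe]; exact hBP)
  have hAA : A * matLog A = U * diagonal (fun i => ((a i * Real.log (a i) : ℝ) : ℂ)) * Uᴴ := by
    rw [hAl]
    conv_lhs => rw [hAe]
    calc _ = U * diagonal (fun i => (a i : ℂ)) * (Uᴴ * U) * diagonal (fun i => (Real.log (a i) : ℂ)) * Uᴴ := by
            simp only [mul_assoc]
      _ = _ := by
        rw [hU', mul_one, mul_assoc U, diagonal_mul_diagonal]
        simp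
  rw [one, mul_one, ← hAA] at t1
  rw [← hAe, ← hBl] at t2
  rw [one, mul_one, ← hAe] at t3
  rw [oneU, mul_one, ← hBe] at t4
  have key : (trace (P * A * (matLog A - matLog B))).re - ((trace (P * A)).re - (trace (P * B)).re)
     = ∑ i, ∑ j, Complex.normSq ((Uᴴ * P * V) i j) *
        (a i * Real.log (a i) - a i * Real.log (b j) - a i + b j) := by
    rw [mul_sub, trace_sub, Complex.sub_re, mul_assoc P A (matLog A), t1, t2, t3, t4]
    simp only [← Finset.sum_sub_distrib]
    refine Finset.sum_congr rfl fun i _ => Finset.sum_congr rfl fun j _ => ?_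
    ring
  have nn : ∀ i j, 0 ≤ Complex.normSq ((Uᴴ * P * V) i j) *
        (a i * Real.log (a i) - a i * Real.log (b j) - a i + b j) := fun i j =>
    mul_nonneg (Complex.normSq_nonneg _) (qj_scalar (ha i) (hb j))
  constructor
  · rw [← sub_nonneg, key]
    exact Finset.sum_nonneg fun i _ => Finset.sum_nonneg fun j _ => nn i j
  · intro he
    rw [← sub_eq_zero, key, Finset.sum_eq_zero_iff_of_nonneg
      (fun i _ => Finset.sum_nonneg fun j _ => nn i j)] at he
    have hz : ∀ i j, (a i : ℂ) * (Uᴴ * P * V) i j = (Uᴴ * P * V) i j * (b j : ℂ) := by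
      intro i j
      have h1 := he i (Finset.mem_univ _)
      rw [Finset.sum_eq_zero_iff_of_nonneg (fun j _ => nn i j)] at h1
      rcases mul_eq_zero.1 (h1 j (Finset.mem_univ _)) with h | h
      · rw [Complex.normSq_eq_zero.1 h]; simp
      · rw [qj_scalar_eq (ha i) (hb j) h, mul_comm]
    have hm : diagonal (fun i => (a i : ℂ)) * (Uᴴ * P * V) = (Uᴴ * P * V) * diagonal (fun i => (b i : ℂ)) := by
      ext i j
      rw [diagonal_mul, mul_diagonal, hz]
    rw [hBP]
    conv_lhs => rw [hAe]
    conv_rhs => rw [hBe]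
    calc _ = U * (diagonal (fun i => (a i : ℂ)) * (Uᴴ * P * V)) * Vᴴ := by
            simp only [mul_assoc, hV, mul_one]
      _ = (U * Uᴴ) * P * (V * diagonal (fun i => (b i : ℂ)) * Vᴴ) := by
            rw [hm]; simp only [mul_assoc]
      _ = _ := by rw [hU, one_mul]

theorem qj_p_pos {d : ℕ} {P ψ : Matrix (Fin d) (Fin d) ℂ} (hne : P ≠ 0) (hPH : Pᴴ = P)
    (hPP : P * P = P) (hψ : ψ.PosDef) : 0 < (trace (ψ * P)).re := by
  have e : trace (ψ * P) = trace (P * ψ * P) := by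
    rw [trace_mul_comm (P * ψ), ← mul_assoc, hPP, trace_mul_comm]
  have hps : (P * ψ * P).PosSemidef := by
    have := hψ.posSemidef.conjTranspose_mul_mul_same P
    rwa [hPH] at this
  have h0 := hps.trace_nonneg
  rw [e]
  have h1 : 0 < trace (P * ψ * P) := by
    refine lt_of_le_of_ne h0 fun h => hne ?_
    have hz := hps.trace_eq_zero_iff.1 h.symm
    ext i j
    by_contra hij
    have hx : P *ᵥ (Pi.single j 1) ≠ 0 := by
      intro hx
      apply hij
      have := congrFun hx i
      simpa using this
    have := hψ.dotProduct_mulVec_pos hx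
    rw [star_mulVec, hPH, ← dotProduct_mulVec, mulVec_mulVec, mulVec_mulVec, hz] at this
    simp at this
  exact (Complex.pos_iff.1 h1).1

theorem qj_rho_pos {d n : ℕ} (P : Fin n → Matrix (Fin d) (Fin d) ℂ)
    (hPH : ∀ i, (P i)ᴴ = P i) (hsum : ∑ i, P i = 1)
    {ψ : Matrix (Fin d) (Fin d) ℂ} (hψ : ψ.PosDef) (c : Fin n → ℝ) (hc : ∀ i, 0 < c i) :
    (∑ i, c i • (P i * ψ * P i)).PosDef := by
  have hq : ∀ i (x : Fin d → ℂ), star x ⬝ᵥ ((c i • (P i * ψ * P i)) *ᵥ x)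
      = (c i : ℂ) * (star (P i *ᵥ x) ⬝ᵥ (ψ *ᵥ (P i *ᵥ x))) := by
    intro i x
    rw [star_mulVec, hPH, ← dotProduct_mulVec, mulVec_mulVec, mulVec_mulVec, smul_mulVec,
      dotProduct_smul, Complex.real_smul]
  refine .of_dotProduct_mulVec_pos ?_ fun x hx => ?_
  · rw [IsHermitian, conjTranspose_sum]
    refine Finset.sum_congr rfl fun i _ => ?_
    rw [conjTranspose_smul, conjTranspose_mul, conjTranspose_mul, hPH, hψ.1.eq, mul_assoc]
    simp
  · rw [sum_mulVec, dotProduct_sum]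
    simp only [hq]
    have hex : ∃ i, P i *ᵥ x ≠ 0 := by
      by_contra! h
      apply hx
      have : (∑ i, P i) *ᵥ x = 0 := by
        rw [sum_mulVec]; exact Finset.sum_eq_zero fun i _ => h i
      rwa [hsum, one_mulVec] at this
    obtain ⟨i, hi⟩ := hex
    have hc' : ∀ i, (0:ℂ) < (c i : ℂ) := fun i => by exact_mod_cast hc i
    exact Finset.sum_pos' (fun j _ => mul_nonneg (hc' j).le
      (hψ.posSemidef.dotProduct_mulVec_nonneg _))
      ⟨i, Finset.mem_univ _, mul_pos (hc' i) (hψ.dotProduct_mulVec_pos hi)⟩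

/-- Key inequality for quantum Jeffrey'\''s rule: with `ρ` the quantum Jeffrey
posterior `∑ i, (l i / Re tr(ψ P i)) • (P i ψ P i)` and `φ` any positive definite density matrix
commuting with every `P i` and satisfying `Re tr(φ P i) = l i`, one has
`Re tr(ψ (log ρ − log φ)) ≥ 0`, with equality iff `φ = ρ`. -/
theorem quantum_jeffrey_key_inequality {d n : ℕ} (hd : 1 ≤ d)
    (P : Fin n → Matrix (Fin d) (Fin d) ℂ)
    (hPne : ∀ i, P i ≠ 0)
    (hPH : ∀ i, (P i)ᴴ = P i)
    (horth : ∀ i j, P i * P j = if i = j then P i else 0)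
    (hsum : ∑ i, P i = 1)
    (ψ : Matrix (Fin d) (Fin d) ℂ) (hψ : ψ.PosDef) (hψ1 : ψ.trace = 1)
    (l : Fin n → ℝ) (hl : ∀ i, 0 < l i) (hl1 : ∑ i, l i = 1)
    (φ : Matrix (Fin d) (Fin d) ℂ) (hφ : φ.PosDef) (hφ1 : φ.trace = 1)
    (hφcomm : ∀ i, φ * P i = P i * φ)
    (hφl : ∀ i, (Matrix.trace (φ * P i)).re = l i) :
    0 ≤ (Matrix.trace (ψ *
        (matLog (∑ i, (l i / (Matrix.trace (ψ * P i)).re) • (P i * ψ * P i)) - matLog φ))).re ∧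
      ((Matrix.trace (ψ *
          (matLog (∑ i, (l i / (Matrix.trace (ψ * P i)).re) • (P i * ψ * P i)) - matLog φ))).re
            = 0 ↔
        φ = ∑ i, (l i / (Matrix.trace (ψ * P i)).re) • (P i * ψ * P i)) := by

  have hPP : ∀ i, P i * P i = P i := fun i => by simpa using horth i i
  have hp : ∀ i, 0 < (trace (ψ * P i)).re := fun i => qj_p_pos (hPne i) (hPH i) (hPP i) hψ
  have hc : ∀ i, 0 < l i / (trace (ψ * P i)).re := fun i => div_pos (hl i) (hp i)
  have hρ := qj_rho_pos P hPH hsum hψ _ hc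
  have hr : ∀ j, (∑ i, (l i / (trace (ψ * P i)).re) • (P i * ψ * P i)) * P j
      = (l j / (trace (ψ * P j)).re) • (P j * ψ * P j) := by
    intro j
    rw [Finset.sum_mul, Finset.sum_eq_single j]
    · rw [smul_mul_assoc, mul_assoc, hPP]
    · intro i _ hij
      rw [smul_mul_assoc, mul_assoc, horth, if_neg hij]; simp
    · simp
  have hr' : ∀ j, P j * (∑ i, (l i / (trace (ψ * P i)).re) • (P i * ψ * P i))
      = (l j / (trace (ψ * P j)).re) • (P j * ψ * P j) := by
    intro j
    rw [Finset.mul_sum, Finset.sum_eq_single j]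
    · rw [mul_smul_comm, ← mul_assoc, ← mul_assoc, hPP]
    · intro i _ hij
      rw [mul_smul_comm, ← mul_assoc, ← mul_assoc, horth, if_neg (Ne.symm hij)]; simp
    · simp
  generalize hρdef : (∑ i, (l i / (trace (ψ * P i)).re) • (P i * ψ * P i)) = ρ at *
  have hρP : ∀ j, ρ * P j = P j * ρ := fun j => by rw [hr, hr']
  have hX : ∀ j, (matLog ρ - matLog φ) * P j = P j * (matLog ρ - matLog φ) := fun j => by
    rw [sub_mul, mul_sub, qj_comm (hρP j) hρ.1, qj_comm (hφcomm j) hφ.1]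
  have hK := fun j => qj_klein hρ hφ (hPH j) (hPP j) (hφcomm j)
  have hz : ∀ j, (trace (P j * ρ)).re - (trace (P j * φ)).re = 0 := by
    intro j
    have e : trace (P j * ψ * P j) = trace (ψ * P j) := by
      rw [trace_mul_comm (P j * ψ), ← mul_assoc, hPP, trace_mul_comm]
    rw [hr', trace_mul_comm (P j) φ, hφl, trace_smul, Complex.smul_re, e, smul_eq_mul,
      div_mul_cancel₀ _ (hp j).ne', sub_self]
  simp only [hz] at hK
  have key : (trace (ψ * (matLog ρ - matLog φ))).re
      = ∑ j, (l j / (trace (ψ * P j)).re)⁻¹ * (trace (P j * ρ * (matLog ρ - matLog φ))).re := by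
    generalize matLog ρ - matLog φ = X at *
    have e : trace (ψ * X) = ∑ j, trace (P j * ψ * P j * X) := by
      calc trace (ψ * X) = trace ((∑ j, P j) * (ψ * X)) := by rw [hsum, one_mul]
        _ = ∑ j, trace (P j * (ψ * X)) := by rw [Finset.sum_mul, trace_sum]
        _ = _ := by
          refine Finset.sum_congr rfl fun j _ => ?_
          rw [mul_assoc _ (P j) X, ← hX j, ← mul_assoc (P j * ψ), trace_mul_comm _ (P j)]
          simp only [← mul_assoc, hPP]
    rw [e, Complex.re_sum]
    refine Finset.sum_congr rfl fun j _ => ?_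
    rw [hr', smul_mul_assoc, trace_smul, Complex.smul_re, smul_eq_mul,
      inv_mul_cancel_left₀ (hc j).ne']
  have nn : ∀ j ∈ Finset.univ, 0 ≤ (l j / (trace (ψ * P j)).re)⁻¹ *
      (trace (P j * ρ * (matLog ρ - matLog φ))).re := fun j _ =>
    mul_nonneg (inv_pos.2 (hc j)).le (hK j).1
  refine ⟨?_, ?_, ?_⟩
  · rw [key]
    exact Finset.sum_nonneg nn
  · intro h
    rw [key, Finset.sum_eq_zero_iff_of_nonneg nn] at h
    have h2 : ∀ j, ρ * P j = φ * P j := fun j =>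
      (hK j).2 ((mul_eq_zero.1 (h j (Finset.mem_univ _))).resolve_left (inv_pos.2 (hc j)).ne')
    calc φ = φ * ∑ j, P j := by rw [hsum, mul_one]
      _ = ρ * ∑ j, P j := by
        rw [Finset.mul_sum, Finset.mul_sum]
        exact Finset.sum_congr rfl fun j _ => (h2 j).symm
      _ = ρ := by rw [hsum, mul_one]
  · intro h
    rw [h]; simp
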